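/- Fix an integer n ≥ 1, p ∈ (1,∞) with p' = p/(p−1), and ε with 1/p' < ε < 1. Then ∫_{supp(w)} f^{p'} w^{1−p'} dx = Σ_{k=3}^∞ k^{−ε p'} < ∞, while ∫_{supp(w)} (T_S f)^{p'} w^{1−p'} dx = ∞. -/

import Mathlib

open MeasureTheory Set ENNReal

noncomputable section

/-- The half-open axis-parallel cube with corner `a` and side length `l`. -/
def Cube (n : ℕ) (a : Fin n → ℝ) (l : ℝ) : Set (Fin n → ℝ) :=
  Set.univ.pi fun i => Set.Ico (a i) (a i + l)

/-- The uncentered Hardy–Littlewood maximal function over axis-parallel cubes: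
`Mg(x) = sup_{Q ∋ x} |Q|⁻¹ ∫_Q g`. -/
def MaxFn {n : ℕ} (g : (Fin n → ℝ) → ℝ≥0∞) (x : Fin n → ℝ) : ℝ≥0∞ :=
  ⨆ (a : Fin n → ℝ) (l : ℝ) (_ : 0 < l) (_ : x ∈ Cube n a l),
    (volume (Cube n a l))⁻¹ * ∫⁻ y in Cube n a l, g y

/-- The cube of the sparse family `S` with parameters `k, N`:
`[0, 2^{-N})^n` for `k = 0` and `[2^k, 2^k + 2^{-N})^n` for `k ≥ 1`. -/
def sCube (n k N : ℕ) : Set (Fin n → ℝ) :=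
  Cube n (fun _ => if k = 0 then 0 else (2:ℝ)^k) ((2:ℝ)^(-(N:ℤ)))

/-- The sparse operator `T_S g = Σ_{Q ∈ S} (|Q|⁻¹ ∫_Q g) 1_Q`. -/
def TS {n : ℕ} (g : (Fin n → ℝ) → ℝ≥0∞) (x : Fin n → ℝ) : ℝ≥0∞ :=
  ∑' q : ℕ × ℕ,
    (sCube n q.1 q.2).indicator
      (fun _ => (volume (sCube n q.1 q.2))⁻¹ * ∫⁻ y in sCube n q.1 q.2, g y) x

/-- The `j`-th digit (for `j ≥ 1`) of `t ∈ [0,1)` in base `2^k`, using the expansion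
which is not eventually constant `2^k - 1`. -/
def digit (k j : ℕ) (t : ℝ) : ℤ := ⌊t * 2^(k*j)⌋ % 2^k

/-- `Ω_m(k) ⊆ [0,1)^n`: the points all of whose coordinates have base-`2^k` digits
in `{0, …, 2^{k-1}-1}` for `1 ≤ j ≤ m-1`, with `m`-th digit equal to `2^{k-1}`. -/
def Omega (n k m : ℕ) : Set (Fin n → ℝ) :=
  {x | (∀ i, x i ∈ Set.Ico (0:ℝ) 1) ∧
    ∀ i, (∀ j, 1 ≤ j → j < m → digit k j (x i) < 2^(k-1)) ∧
      digit k m (x i) = 2^(k-1)}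

/-- The weight `w_k = Σ_{m ≥ 1} (2^{kn}/(2^{(k-1)n}+1))^m 1_{Ω_m(k)}`. -/
def wk (n k : ℕ) : (Fin n → ℝ) → ℝ≥0∞ := fun x =>
  ∑' m : ℕ,
    (Omega n k (m+1)).indicator
      (fun _ => ((2:ℝ≥0∞)^(k*n) / ((2:ℝ≥0∞)^((k-1)*n) + 1))^(m+1)) x

/-- `Q_1^m(k) = [2^{-k(m-1)-1}, 2^{-k(m-1)-1} + 2^{-km})^n`. -/
def Q1 (n k m : ℕ) : Set (Fin n → ℝ) :=
  Cube n (fun _ => (2:ℝ)^(-(k*(m-1) : ℤ) - 1)) ((2:ℝ)^(-(k*m : ℤ)))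

/-- `Γ(k) = ⋃_{m ≥ 3} Q_1^m(k)`. -/
def Gamma (n k : ℕ) : Set (Fin n → ℝ) := ⋃ m : ℕ, Q1 n k (m+3)

/-- `A_k = 2^{(k-1)n} (2^{(k-1)n}+1)^2`. -/
def Ak (n k : ℕ) : ℝ≥0∞ := 2^((k-1)*n) * (2^((k-1)*n) + 1)^2

/-- The weight `w(x) = Σ_{k ≥ 3} A_k w_k(x - 2⃗^k) 1_{Γ(k)}(x - 2⃗^k)`. -/
def bigW (n : ℕ) : (Fin n → ℝ) → ℝ≥0∞ := fun x =>
  ∑' k : ℕ,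
    (Gamma n (k+3)).indicator (fun z => Ak n (k+3) * wk n (k+3) z)
      (fun i => x i - (2:ℝ)^(k+3))

/-- The test function `f(x) = Σ_{k ≥ 3} k^{-ε} A_k w_k(x - 2⃗^k)`. -/
def bigF (n : ℕ) (ε : ℝ) : (Fin n → ℝ) → ℝ≥0∞ := fun x =>
  ∑' k : ℕ,
    ((k+3 : ℝ≥0∞) ^ (-ε)) * Ak n (k+3) * wk n (k+3) (fun i => x i - (2:ℝ)^(k+3))

/-- `T` is bounded from `L^p(v)` to `L^p(u)` (for nonnegative functions, which are
required to be supported in `supp v`): there is a finite constant `C` with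
`‖Tf‖_{L^p(u)} ≤ C ‖f‖_{L^p(v)}` for all `f ∈ L^p(v)`. -/
def BddOn {n : ℕ} (T : ((Fin n → ℝ) → ℝ≥0∞) → (Fin n → ℝ) → ℝ≥0∞)
    (p : ℝ) (v u : (Fin n → ℝ) → ℝ≥0∞) : Prop :=
  ∃ C : ℝ≥0∞, C ≠ ∞ ∧ ∀ f : (Fin n → ℝ) → ℝ≥0∞, Measurable f →
    (∀ x, v x = 0 → f x = 0) → (∫⁻ x, f x ^ p * v x) < ∞ →
    ∫⁻ x, T f x ^ p * u x ≤ C ^ p * ∫⁻ x, f x ^ p * v x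

/-- The dual weight `u^{1-p'} 1_{supp u}`. -/
def dualW {n : ℕ} (u : (Fin n → ℝ) → ℝ≥0∞) (q : ℝ) : (Fin n → ℝ) → ℝ≥0∞ :=
  fun x => if u x = 0 then 0 else u x ^ (1 - q)

/-
The weight `w_k` is self-similar: at the scales `2^{-(kj+i)}`, `1 ≤ i ≤ k`, its average over
`[0, 2^{-(kj+i)})^n` is at least `r^{j+1}`, with `r` the ratio of its consecutive values, and this
bound does not depend on `i`. Hence at a point of `2⃗^k + Q_1^{m+1}(k)`, where `w = A_k r^{m+1}`,
the `k` cubes of `S` at the scales `2^{-(k(m-1)+i)}` all contribute at least `k^{-ε} A_k r^m` to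
`T_S f`. Since `r ≤ 2^n`, this gives `T_S f ≥ 2^{-n} k^{1-ε} w` on `2⃗^k + Γ(k)`, whereas `f` equals
`k^{-ε} w` there. The constant `A_k` normalizes `∫_{2⃗^k + Γ(k)} w = 1`, so `f^q w^{1-q}` has
integral `Σ k^{-εq}`, while that of `(T_S f)^q w^{1-q}` is, up to a constant, at least
`Σ k^{(1-ε)q}`.
-/

lemma ofReal_inv_two_pow (N : ℕ) : ENNReal.ofReal ((2 : ℝ) ^ N)⁻¹ = ((2 : ℝ≥0∞) ^ N)⁻¹ := by
  simp [ENNReal.ofReal_inv_of_pos, ENNReal.ofReal_pow]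

lemma mul_inv_add_one_add_inv {M : ℝ≥0∞} (hM : M ≠ ∞) : M * (M + 1)⁻¹ + (M + 1)⁻¹ = 1 := by
  rw [← add_one_mul, ENNReal.mul_inv_cancel (by simp) (by simp [hM])]

lemma mul_rpow_mul_rpow_one_sub {a : ℝ≥0∞} {q : ℝ} (hq : 0 ≤ q) (ha_zero : a ≠ 0) (ha_top : a ≠ ∞)
    (c : ℝ≥0∞) : (c * a) ^ q * a ^ (1 - q) = c ^ q * a := by
  rw [ENNReal.mul_rpow_of_nonneg _ _ hq, mul_assoc, ← ENNReal.rpow_add _ _ ha_zero ha_top,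
    add_sub_cancel, ENNReal.rpow_one]

lemma tsum_pow_mul_eq_one {a b : ℝ≥0∞} (hab : a + b = 1) (hb : b ≠ 0) :
    ∑' m : ℕ, a ^ m * b = 1 := by
  have ha_top : a ≠ ∞ := ne_top_of_le_ne_top one_ne_top (hab ▸ le_self_add)
  have hb_top : b ≠ ∞ := ne_top_of_le_ne_top one_ne_top (hab ▸ le_add_self)
  rw [ENNReal.tsum_mul_right, ENNReal.tsum_geometric, ENNReal.sub_eq_of_eq_add_rev ha_top hab.symm,
    ENNReal.inv_mul_cancel hb hb_top]

lemma card_mul_le_tsum {ι κ : Type*} {a : ℝ≥0∞} {f : κ → ℝ≥0∞} {g : ι → κ}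
    (hg : Function.Injective g) (s : Finset ι) (h : ∀ i ∈ s, a ≤ f (g i)) :
    s.card * a ≤ ∑' j, f j := calc
  _ = s.card • a := (nsmul_eq_mul _ _).symm
  _ ≤ ∑ i ∈ s, f (g i) := s.card_nsmul_le_sum _ _ h
  _ ≤ ∑' i, f (g i) := ENNReal.sum_le_tsum s
  _ ≤ ∑' j, f j := ENNReal.tsum_comp_le_tsum_of_injective hg f

lemma tsum_nat_add_rpow_neg_ne_top_iff {a : ℕ} (ha : a ≠ 0) {s : ℝ} :
    ∑' k : ℕ, ((k : ℝ≥0∞) + a) ^ (-s) ≠ ∞ ↔ 1 < s := by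
  have hcoe (k : ℕ) : ((k : ℝ≥0∞) + a) ^ (-s) = (((k + a : ℕ) : NNReal) ^ (-s) : NNReal) := by
    rw [ENNReal.coe_rpow_of_ne_zero (by exact_mod_cast (by omega : k + a ≠ 0))]
    push_cast
    rfl
  rw [tsum_congr hcoe, ENNReal.tsum_coe_ne_top_iff_summable,
    NNReal.summable_nat_add_iff a (f := fun k : ℕ ↦ (k : NNReal) ^ (-s)), NNReal.summable_rpow,
    neg_lt_neg_iff]

section Cubes

variable {n : ℕ} {a : Fin n → ℝ} {l : ℝ}

lemma measurableSet_Cube : MeasurableSet (Cube n a l) :=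
  .univ_pi fun _ ↦ measurableSet_Ico

lemma volume_Cube : volume (Cube n a l) = ENNReal.ofReal l ^ n := by
  simp [Cube, volume_pi_pi]

lemma Cube_zero : Cube n 0 l = univ.pi fun _ ↦ Ico 0 l := by simp [Cube]

lemma preimage_sub_Cube (b : Fin n → ℝ) : (· - b) ⁻¹' Cube n a l = Cube n (a + b) l := by
  ext x
  simp [Cube, le_sub_iff_add_le, sub_lt_iff_lt_add, add_right_comm]

lemma measurableSet_Q1 (n k m : ℕ) : MeasurableSet (Q1 n k m) := measurableSet_Cube

lemma Q1_succ (n k m : ℕ) :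
    Q1 n k (m + 1) = Cube n (fun _ ↦ ((2 : ℝ) ^ (k * m + 1))⁻¹) ((2 : ℝ) ^ (k * (m + 1)))⁻¹ := by
  simp only [Q1, ← zpow_natCast, ← zpow_neg]
  push_cast
  ring_nf

lemma volume_Q1_succ (n k m : ℕ) :
    volume (Q1 n k (m + 1)) = ((2 ^ (k * n))⁻¹) ^ (m + 1) := by
  rw [Q1_succ, volume_Cube, ofReal_inv_two_pow, ← ENNReal.inv_pow, ← ENNReal.inv_pow, ← pow_mul,
    ← pow_mul, mul_right_comm]

end Cubes

section Digits

variable {k i j m : ℕ} {t : ℝ}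

lemma digit_two_pow_mul (k i j : ℕ) (t : ℝ) :
    digit k j (2 ^ (k * i) * t) = digit k (i + j) t := by
  rw [digit, digit, mul_add, pow_add, mul_comm _ t, mul_assoc]

lemma digit_fract (hj : 1 ≤ j) (t : ℝ) : digit k j (Int.fract t) = digit k j t := by
  obtain ⟨i, rfl⟩ := Nat.exists_eq_add_of_le hj
  have shift : Int.fract t * 2 ^ (k * (1 + i)) =
      t * 2 ^ (k * (1 + i)) - ((2 ^ k * (⌊t⌋ * 2 ^ (k * i)) : ℤ) : ℝ) := by
    push_cast
    rw [← Int.self_sub_floor]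
    ring
  rw [digit, shift, Int.floor_sub_intCast, Int.sub_mul_emod_self_left, digit]

lemma digit_eq_floor (h : t * 2 ^ (k * j) ∈ Ico 0 (2 ^ k)) : digit k j t = ⌊t * 2 ^ (k * j)⌋ :=
  Int.emod_eq_of_lt (Int.floor_nonneg.2 h.1) (Int.floor_lt.2 (by exact_mod_cast h.2))

lemma digit_one (ht : t ∈ Ico 0 1) : digit k 1 t = ⌊2 ^ k * t⌋ := by
  rw [digit_eq_floor, mul_one, mul_comm]
  rw [mul_one]
  exact ⟨mul_nonneg ht.1 (by positivity), mul_lt_of_lt_one_left (by positivity) ht.2⟩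

lemma digit_eq_zero (ht : t ∈ Ico 0 ((2 : ℝ) ^ (k * j))⁻¹) (hij : i ≤ j) : digit k i t = 0 := by
  have hlt : t * 2 ^ (k * i) < 1 := by
    rw [← lt_div_iff₀ (by positivity), one_div]
    refine ht.2.trans_le (inv_anti₀ (by positivity) ?_)
    gcongr
    norm_num
  have hfloor : ⌊t * 2 ^ (k * i)⌋ = 0 :=
    Int.floor_eq_zero_iff.2 ⟨mul_nonneg ht.1 (by positivity), hlt⟩
  rw [digit, hfloor, Int.zero_emod]

lemma measurable_digit (k j : ℕ) : Measurable (digit k j) :=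
  (measurable_of_countable fun z : ℤ ↦ z % 2 ^ k).comp
    (Int.measurable_floor.comp (measurable_id.mul_const _))

/-- The one-dimensional factor of `Omega n k m`, which is the product of `n` copies of it
(`Omega_eq_pi`). -/
def digitSet (k m : ℕ) : Set ℝ :=
  {t | t ∈ Ico 0 1 ∧ (∀ j, 1 ≤ j → j < m → digit k j t < 2 ^ (k - 1)) ∧
    digit k m t = 2 ^ (k - 1)}

lemma digitSet_subset (k m : ℕ) : digitSet k m ⊆ Ico 0 1 := fun _ h ↦ h.1

lemma measurableSet_digitSet (k m : ℕ) : MeasurableSet (digitSet k m) := by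
  have hlt : MeasurableSet {t | ∀ j, 1 ≤ j → j < m → digit k j t < 2 ^ (k - 1)} := by
    simp only [ofPred_forall]
    exact .iInter fun j ↦ .iInter fun _ ↦ .iInter fun _ ↦
      measurableSet_lt (measurable_digit k j) measurable_const
  exact measurableSet_Ico.inter
    (hlt.inter (measurableSet_eq_fun (measurable_digit k m) measurable_const))

lemma digitSet_one (hk : 1 ≤ k) :
    digitSet k 1 = (fun t : ℝ ↦ 2 ^ k * t) ⁻¹' Ico (2 ^ (k - 1)) (2 ^ (k - 1) + 1) := by
  ext t
  have hfloor : ⌊2 ^ k * t⌋ = 2 ^ (k - 1) ↔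
      2 ^ k * t ∈ Ico ((2 : ℝ) ^ (k - 1)) (2 ^ (k - 1) + 1) := by
    rw [Int.floor_eq_iff]
    push_cast
    rfl
  refine ⟨fun ⟨ht, _, h⟩ ↦ hfloor.1 (digit_one ht ▸ h), fun h ↦ ?_⟩
  have hpow : (2 : ℝ) ^ k = 2 * 2 ^ (k - 1) := (mul_pow_sub_one (by omega) 2).symm
  have hone : (1 : ℝ) ≤ 2 ^ (k - 1) := one_le_pow₀ one_le_two
  have hunit : t ∈ Ico 0 1 := by
    have := h.1
    have := h.2
    simp only [hpow] at *
    constructor <;> nlinarith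
  exact ⟨hunit, fun j _ _ ↦ by omega, (digit_one hunit).trans (hfloor.2 h)⟩

lemma digitSet_succ (hk : 1 ≤ k) (hm : 1 ≤ m) :
    digitSet k (m + 1) =
      (fun t : ℝ ↦ 2 ^ k * t) ⁻¹' (Ico 0 (2 ^ (k - 1)) ∩ Int.fract ⁻¹' digitSet k m) := by
  ext t
  have digit_tail {j : ℕ} (hj : 1 ≤ j) : digit k j (Int.fract (2 ^ k * t)) = digit k (j + 1) t := by
    rw [digit_fract hj, add_comm, ← digit_two_pow_mul, mul_one]
  have first_digit (ht : t ∈ Ico 0 1) : digit k 1 t < 2 ^ (k - 1) ↔ 2 ^ k * t < 2 ^ (k - 1) := by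
    rw [digit_one ht, Int.floor_lt]
    push_cast
    rfl
  constructor
  · rintro ⟨ht, hlt, heq⟩
    refine ⟨⟨mul_nonneg (by positivity) ht.1, (first_digit ht).1 (hlt 1 le_rfl (by omega))⟩,
      ⟨Int.fract_nonneg _, Int.fract_lt_one _⟩, fun j hj hjm ↦ ?_, ?_⟩
    · exact digit_tail hj ▸ hlt (j + 1) (by omega) (by omega)
    · exact digit_tail hm ▸ heq
  · rintro ⟨⟨hnonneg, hhalf⟩, -, hlt, heq⟩
    have hunit : t ∈ Ico 0 1 := by
      refine ⟨nonneg_of_mul_nonneg_right hnonneg (by positivity), ?_⟩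
      refine lt_of_mul_lt_mul_left (hhalf.trans_le ?_) (by positivity : (0 : ℝ) ≤ 2 ^ k)
      rw [mul_one]
      exact pow_le_pow_right₀ one_le_two (by omega)
    refine ⟨hunit, fun j hj hjm ↦ ?_, digit_tail hm ▸ heq⟩
    obtain rfl | hj := hj.eq_or_lt
    · exact (first_digit hunit).2 hhalf
    · obtain ⟨i, rfl⟩ := Nat.exists_eq_add_of_lt hj
      exact digit_tail (j := 1 + i) (by omega) ▸ hlt _ (by omega) (by omega)

lemma mem_digitSet_add_iff (ht : t ∈ Ico 0 ((2 : ℝ) ^ (k * j))⁻¹) :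
    t ∈ digitSet k (j + m) ↔ 2 ^ (k * j) * t ∈ digitSet k m := by
  have hunit : t ∈ Ico 0 1 :=
    ⟨ht.1, ht.2.trans_le (inv_le_one_of_one_le₀ (one_le_pow₀ one_le_two))⟩
  have hscaled : 2 ^ (k * j) * t ∈ Ico 0 1 := by
    refine ⟨mul_nonneg (by positivity) ht.1, ?_⟩
    rw [← lt_div_iff₀' (by positivity), one_div]
    exact ht.2
  simp only [digitSet, mem_ofPred_eq, digit_two_pow_mul, hunit, hscaled, true_and]
  refine and_congr_left fun _ ↦ ⟨fun h i hi him ↦ h _ (by omega) (by omega), fun h i hi him ↦ ?_⟩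
  obtain hij | hji := le_or_gt i j
  · rw [digit_eq_zero ht hij]
    positivity
  · obtain ⟨l, rfl⟩ := Nat.exists_eq_add_of_le hji.le
    exact h l (by omega) (by omega)

lemma Ico_zero_inv_two_pow_add (N i : ℕ) :
    Ico 0 ((2 : ℝ) ^ (N + i))⁻¹ = (fun t : ℝ ↦ 2 ^ N * t) ⁻¹' Ico 0 ((2 : ℝ) ^ i)⁻¹ := by
  rw [preimage_const_mul_Ico₀ _ _ (by positivity), zero_div, pow_add, mul_inv_rev, div_eq_mul_inv]

lemma Ico_zero_inv_two_pow (d i : ℕ) :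
    Ico 0 ((2 : ℝ) ^ i)⁻¹ = (fun t : ℝ ↦ 2 ^ (d + i) * t) ⁻¹' Ico 0 (2 ^ d) := by
  rw [preimage_const_mul_Ico₀ _ _ (by positivity), zero_div, pow_add]
  field_simp

lemma Ico_subset_digitSet_inter (hk : 1 ≤ k) (m : ℕ) :
    Ico ((2 : ℝ) ^ (k * m + 1))⁻¹ (((2 : ℝ) ^ (k * m + 1))⁻¹ + ((2 : ℝ) ^ (k * (m + 1)))⁻¹) ⊆
      digitSet k (m + 1) ∩ Ico 0 ((2 : ℝ) ^ (k * m))⁻¹ := by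
  have hpreimage : Ico ((2 : ℝ) ^ (k * m + 1))⁻¹
      (((2 : ℝ) ^ (k * m + 1))⁻¹ + ((2 : ℝ) ^ (k * (m + 1)))⁻¹) =
      (fun t : ℝ ↦ 2 ^ (k * m) * t) ⁻¹' digitSet k 1 := by
    obtain ⟨i, rfl⟩ := Nat.exists_eq_add_of_le' hk
    rw [digitSet_one hk, preimage_const_mul_Ico₀ _ _ (by positivity),
      preimage_const_mul_Ico₀ _ _ (by positivity), Nat.add_sub_cancel, mul_add_one, pow_add,
      pow_add, pow_succ _ i]
    congr 1 <;> field_simp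
  intro t ht
  rw [hpreimage] at ht
  have hunit : t ∈ Ico 0 ((2 : ℝ) ^ (k * m))⁻¹ := by
    rw [← add_zero (k * m), Ico_zero_inv_two_pow_add, pow_zero, inv_one]
    exact digitSet_subset k 1 ht
  exact ⟨add_comm 1 m ▸ (mem_digitSet_add_iff hunit).2 ht, hunit⟩

lemma volume_two_pow_mul_preimage (N : ℕ) (s : Set ℝ) :
    volume ((fun t : ℝ ↦ 2 ^ N * t) ⁻¹' s) = (2 ^ N)⁻¹ * volume s := by
  rw [Real.volume_preimage_mul_left (by positivity), abs_of_pos (by positivity),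
    ofReal_inv_two_pow]

lemma volume_Ico_inter_fract_preimage {D : Set ℝ} (hD : MeasurableSet D) (c : ℕ) :
    volume (Ico 0 (c : ℝ) ∩ Int.fract ⁻¹' D) = c * volume (D ∩ Ico 0 1) := by
  have translate (c : ℕ) :
      volume (Ico (c : ℝ) (c + 1) ∩ Int.fract ⁻¹' D) = volume (D ∩ Ico 0 1) := by
    rw [← measure_preimage_add_right volume (c : ℝ)]
    congr 1
    ext t
    simp only [mem_preimage, mem_inter_iff, mem_Ico, Int.fract_add_natCast, le_add_iff_nonneg_left,
      add_comm _ (1 : ℝ), add_lt_add_iff_right, and_comm (a := _ ∧ _)]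
    refine and_congr_left fun ht ↦ ?_
    rw [Int.fract_eq_self.2 ht]
  induction c with
  | zero => simp
  | succ c ih =>
    rw [Nat.cast_succ, ← Ico_union_Ico_eq_Ico c.cast_nonneg (by linarith : (c : ℝ) ≤ c + 1),
      union_inter_distrib_right, measure_union _ (measurableSet_Ico.inter (measurable_fract hD)),
      ih, translate]
    · push_cast
      ring
    · exact (Ico_disjoint_Ico_same).mono inter_subset_left inter_subset_left

lemma volume_digitSet_succ_inter_Ico (hm : 1 ≤ m) (hi : 1 ≤ i) (hik : i ≤ k) :
    volume (digitSet k (m + 1) ∩ Ico 0 ((2 : ℝ) ^ i)⁻¹) =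
      (2 ^ i)⁻¹ * volume (digitSet k m) := by
  obtain ⟨d, rfl⟩ := Nat.exists_eq_add_of_le' hik
  have hle : (2 : ℝ) ^ d ≤ 2 ^ (d + i - 1) := pow_le_pow_right₀ one_le_two (by omega)
  have hset : digitSet (d + i) (m + 1) ∩ Ico 0 ((2 : ℝ) ^ i)⁻¹ = (fun t : ℝ ↦ 2 ^ (d + i) * t) ⁻¹'
      (Ico 0 ((2 ^ d : ℕ) : ℝ) ∩ Int.fract ⁻¹' digitSet (d + i) m) := by
    rw [digitSet_succ (hi.trans hik) hm, Ico_zero_inv_two_pow d, ← preimage_inter,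
      inter_right_comm, Ico_inter_Ico, max_self, min_eq_right hle, Nat.cast_pow, Nat.cast_two]
  have hscale : ((2 : ℝ≥0∞) ^ (d + i))⁻¹ * 2 ^ d = (2 ^ i)⁻¹ := by
    rw [pow_add, ENNReal.mul_inv (by simp) (by simp), mul_right_comm,
      ENNReal.inv_mul_cancel (by simp) (by simp), one_mul]
  rw [hset, volume_two_pow_mul_preimage,
    volume_Ico_inter_fract_preimage (measurableSet_digitSet _ m),
    inter_eq_left.2 (digitSet_subset _ m), ← mul_assoc, Nat.cast_pow, Nat.cast_two, hscale]

lemma volume_digitSet_succ (hk : 1 ≤ k) (m : ℕ) :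
    volume (digitSet k (m + 1)) = (2 ^ (k + m))⁻¹ := by
  induction m with
  | zero => rw [digitSet_one hk, volume_two_pow_mul_preimage]; simp
  | succ m ih =>
    have hsub : digitSet k (m + 1 + 1) ⊆ Ico 0 ((2 : ℝ) ^ 1)⁻¹ := by
      rw [Ico_zero_inv_two_pow (k - 1), Nat.sub_add_cancel hk, digitSet_succ hk (by omega)]
      exact preimage_mono inter_subset_left
    rw [← inter_eq_left.2 hsub, volume_digitSet_succ_inter_Ico (by omega) le_rfl hk, ih,
      ← ENNReal.mul_inv (by simp) (by simp), ← pow_add, add_comm 1, add_assoc]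

lemma volume_digitSet_inter_Ico (hm : 1 ≤ m) (hi : 1 ≤ i) (hik : i ≤ k) (j : ℕ) :
    volume (digitSet k (j + (m + 1)) ∩ Ico 0 ((2 : ℝ) ^ (k * j + i))⁻¹) =
      (2 ^ (k * j + i))⁻¹ * volume (digitSet k m) := by
  have hle : Ico 0 ((2 : ℝ) ^ (k * j + i))⁻¹ ⊆ Ico 0 ((2 : ℝ) ^ (k * j))⁻¹ :=
    Ico_subset_Ico_right
      (inv_anti₀ (by positivity) (pow_le_pow_right₀ one_le_two (Nat.le_add_right _ _)))
  have hset : digitSet k (j + (m + 1)) ∩ Ico 0 ((2 : ℝ) ^ (k * j + i))⁻¹ =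
      (fun t : ℝ ↦ 2 ^ (k * j) * t) ⁻¹' (digitSet k (m + 1) ∩ Ico 0 ((2 : ℝ) ^ i)⁻¹) := by
    rw [preimage_inter, ← Ico_zero_inv_two_pow_add]
    ext t
    exact and_congr_left fun ht ↦ mem_digitSet_add_iff (hle ht)
  rw [hset, volume_two_pow_mul_preimage, volume_digitSet_succ_inter_Ico hm hi hik, ← mul_assoc,
    ← ENNReal.mul_inv (by simp) (by simp), ← pow_add]

end Digits

section Omega

variable {n k i m m' : ℕ} {x : Fin n → ℝ}

lemma Omega_eq_pi (n k m : ℕ) : Omega n k m = univ.pi fun _ ↦ digitSet k m := by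
  ext x
  simp [Omega, digitSet, forall_and]

lemma measurableSet_Omega (n k m : ℕ) : MeasurableSet (Omega n k m) := by
  rw [Omega_eq_pi]
  exact .univ_pi fun _ ↦ measurableSet_digitSet k m

lemma volume_Omega (n k m : ℕ) : volume (Omega n k m) = volume (digitSet k m) ^ n := by
  simp [Omega_eq_pi, volume_pi_pi]

lemma volume_Omega_succ (n : ℕ) (hk : 1 ≤ k) (m : ℕ) :
    volume (Omega n k (m + 1)) = ((2 ^ n)⁻¹) ^ m * (2 ^ (k * n))⁻¹ := by
  rw [volume_Omega, volume_digitSet_succ hk, ← ENNReal.inv_pow, ← ENNReal.inv_pow,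
    ← ENNReal.mul_inv (by simp) (by simp), ← pow_mul, ← pow_mul, ← pow_add]
  ring_nf

lemma volume_Omega_inter_Cube (n : ℕ) (hm : 1 ≤ m) (hi : 1 ≤ i) (hik : i ≤ k) (j : ℕ) :
    volume (Omega n k (j + (m + 1)) ∩ Cube n 0 (2 ^ (k * j + i))⁻¹) =
      volume (Cube n 0 (2 ^ (k * j + i))⁻¹) * volume (Omega n k m) := by
  rw [volume_Omega, volume_Cube, ofReal_inv_two_pow, ← mul_pow,
    ← volume_digitSet_inter_Ico hm hi hik, Omega_eq_pi, Cube_zero, ← pi_inter_distrib]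
  simp [volume_pi_pi]

lemma Q1_succ_subset_Omega (n : ℕ) (hk : 1 ≤ k) (m : ℕ) : Q1 n k (m + 1) ⊆ Omega n k (m + 1) := by
  rw [Q1_succ, Omega_eq_pi]
  exact pi_mono fun _ _ ↦ (Ico_subset_digitSet_inter hk m).trans inter_subset_left

lemma Omega_subset_Cube (n k m : ℕ) : Omega n k m ⊆ Cube n 0 1 := by
  rw [Omega_eq_pi, Cube_zero]
  exact pi_mono fun _ _ ↦ digitSet_subset k m

lemma disjoint_Omega [NeZero n] (hm : 1 ≤ m) (h : m < m') : Disjoint (Omega n k m) (Omega n k m') :=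
  disjoint_left.2 fun _ hx hx' ↦ ((hx'.2 0).1 m hm h).ne (hx.2 0).2

lemma pairwise_disjoint_Omega_succ (n k : ℕ) [NeZero n] :
    Pairwise (Function.onFun Disjoint fun m ↦ Omega n k (m + 1)) :=
  (pairwise_disjoint_on _).2 fun _ _ h ↦ disjoint_Omega (by omega) (by omega)

/-- The common ratio `2^{kn} / (2^{(k-1)n} + 1)` of the values of `wk n k` on the successive
`Omega n k m`. -/
def weightRatio (n k : ℕ) : ℝ≥0∞ := 2 ^ (k * n) / (2 ^ ((k - 1) * n) + 1)

lemma weightRatio_ne_zero (n k : ℕ) : weightRatio n k ≠ 0 :=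
  ENNReal.div_ne_zero.2 ⟨by positivity, by simp⟩

lemma weightRatio_ne_top (n k : ℕ) : weightRatio n k ≠ ∞ :=
  ENNReal.div_ne_top (by simp) (by simp)

lemma weightRatio_mul_inv_two_pow_mul (n k : ℕ) :
    weightRatio n k * (2 ^ (k * n))⁻¹ = (2 ^ ((k - 1) * n) + 1)⁻¹ := by
  rw [weightRatio, ENNReal.div_eq_inv_mul, mul_assoc, ENNReal.mul_inv_cancel (by simp) (by simp),
    mul_one]

lemma weightRatio_mul_inv_two_pow (n : ℕ) (hk : 1 ≤ k) :
    weightRatio n k * (2 ^ n)⁻¹ = 2 ^ ((k - 1) * n) * (2 ^ ((k - 1) * n) + 1)⁻¹ := by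
  have hinv : ((2 : ℝ≥0∞) ^ n)⁻¹ = 2 ^ ((k - 1) * n) * (2 ^ (k * n))⁻¹ := by
    obtain ⟨i, rfl⟩ := Nat.exists_eq_add_of_le' hk
    rw [Nat.add_sub_cancel, add_one_mul, pow_add, ENNReal.mul_inv (by simp) (by simp), ← mul_assoc,
      ENNReal.mul_inv_cancel (by simp) (by simp), one_mul]
  rw [hinv, mul_left_comm, weightRatio_mul_inv_two_pow_mul]

lemma weightRatio_mul_inv_two_pow_le_one (n : ℕ) (hk : 1 ≤ k) :
    weightRatio n k * (2 ^ n)⁻¹ ≤ 1 := by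
  rw [weightRatio_mul_inv_two_pow n hk]
  exact le_self_add.trans_eq (mul_inv_add_one_add_inv (by simp))

lemma measurable_wk (n k : ℕ) : Measurable (wk n k) :=
  .tsum fun m ↦ measurable_const.indicator (measurableSet_Omega n k (m + 1))

lemma wk_of_mem_Omega [NeZero n] (hx : x ∈ Omega n k (m + 1)) :
    wk n k x = weightRatio n k ^ (m + 1) := by
  refine (tsum_eq_single m fun l hl ↦ indicator_of_notMem ?_ _).trans (indicator_of_mem hx _)
  exact disjoint_left.1 (pairwise_disjoint_Omega_succ n k hl.symm) hx

lemma wk_eq_zero (hx : x ∉ Cube n 0 1) : wk n k x = 0 :=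
  ENNReal.tsum_eq_zero.2 fun _ ↦ indicator_of_notMem (fun h ↦ hx (Omega_subset_Cube n k _ h)) _

lemma setLIntegral_wk (n k : ℕ) (s : Set (Fin n → ℝ)) :
    ∫⁻ x in s, wk n k x = ∑' m, weightRatio n k ^ (m + 1) * volume (Omega n k (m + 1) ∩ s) := by
  simp only [wk]
  rw [lintegral_tsum fun m ↦
    (measurable_const.indicator (measurableSet_Omega n k (m + 1))).aemeasurable]
  refine tsum_congr fun m ↦ ?_
  rw [lintegral_indicator_const (measurableSet_Omega n k _),
    Measure.restrict_apply (measurableSet_Omega n k _), weightRatio]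

lemma lintegral_wk (n : ℕ) (hk : 1 ≤ k) : ∫⁻ x, wk n k x = 1 := by
  rw [← setLIntegral_univ, setLIntegral_wk,
    ← tsum_pow_mul_eq_one (mul_inv_add_one_add_inv (M := 2 ^ ((k - 1) * n)) (by simp)) (by simp)]
  refine tsum_congr fun m ↦ ?_
  rw [inter_univ, volume_Omega_succ n hk, ← weightRatio_mul_inv_two_pow n hk,
    ← weightRatio_mul_inv_two_pow_mul]
  ring

lemma volume_Cube_mul_pow_le_setLIntegral_wk (n : ℕ) (hi : 1 ≤ i) (hik : i ≤ k) (j : ℕ) :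
    volume (Cube n 0 (2 ^ (k * j + i))⁻¹) * weightRatio n k ^ (j + 1) ≤
      ∫⁻ x in Cube n 0 (2 ^ (k * j + i))⁻¹, wk n k x := by
  set Q := Cube n 0 (2 ^ (k * j + i))⁻¹
  have tail (m : ℕ) :
      weightRatio n k ^ (j + 1 + m + 1) * volume (Omega n k (j + 1 + m + 1) ∩ Q) =
      volume Q * weightRatio n k ^ (j + 1) *
        (weightRatio n k ^ (m + 1) * volume (Omega n k (m + 1) ∩ univ)) := by
    rw [show j + 1 + m + 1 = j + (m + 1 + 1) by ring,
      volume_Omega_inter_Cube n (by omega) hi hik j, inter_univ]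
    ring
  calc volume Q * weightRatio n k ^ (j + 1)
    _ = volume Q * weightRatio n k ^ (j + 1) * ∫⁻ x in univ, wk n k x := by
      rw [setLIntegral_univ, lintegral_wk n (hi.trans hik), mul_one]
    _ = ∑' m, weightRatio n k ^ (j + 1 + m + 1) * volume (Omega n k (j + 1 + m + 1) ∩ Q) := by
      rw [setLIntegral_wk, ← ENNReal.tsum_mul_left, tsum_congr tail]
    _ ≤ ∫⁻ x in Q, wk n k x := by
      rw [setLIntegral_wk]
      exact ENNReal.tsum_comp_le_tsum_of_injective (add_right_injective (j + 1)) _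

end Omega

section Gamma

variable {n k i m : ℕ} {x : Fin n → ℝ}

lemma measurableSet_Gamma (n k : ℕ) : MeasurableSet (Gamma n k) :=
  .iUnion fun _ ↦ measurableSet_Q1 n k _

lemma Gamma_subset_Cube (n : ℕ) (hk : 1 ≤ k) : Gamma n k ⊆ Cube n 0 1 :=
  iUnion_subset fun m ↦ (Q1_succ_subset_Omega n hk (m + 2)).trans (Omega_subset_Cube n k _)

lemma wk_of_mem_Q1 [NeZero n] (hk : 1 ≤ k) (hx : x ∈ Q1 n k (m + 1)) :
    wk n k x = weightRatio n k ^ (m + 1) :=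
  wk_of_mem_Omega (Q1_succ_subset_Omega n hk m hx)

lemma Ak_ne_zero (n k : ℕ) : Ak n k ≠ 0 := by
  unfold Ak
  positivity

lemma Ak_ne_top (n k : ℕ) : Ak n k ≠ ∞ :=
  ENNReal.mul_ne_top (by simp) (by simp)

lemma Ak_mul_inv_sq (n k : ℕ) :
    Ak n k * ((2 ^ ((k - 1) * n) + 1)⁻¹) ^ 2 = 2 ^ ((k - 1) * n) := by
  rw [Ak, mul_assoc, ← mul_pow, ENNReal.mul_inv_cancel (by simp) (by simp), one_pow, mul_one]

lemma setLIntegral_Q1_wk (n : ℕ) [NeZero n] (hk : 1 ≤ k) (m : ℕ) :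
    ∫⁻ x in Q1 n k (m + 1), wk n k x = ((2 ^ ((k - 1) * n) + 1)⁻¹) ^ (m + 1) := by
  rw [setLIntegral_congr_fun (measurableSet_Q1 n k (m + 1)) fun _ hx ↦ wk_of_mem_Q1 hk hx,
    setLIntegral_const, volume_Q1_succ, ← mul_pow, weightRatio_mul_inv_two_pow_mul]

lemma Ak_mul_setLIntegral_Gamma_wk (n : ℕ) [NeZero n] (hk : 1 ≤ k) :
    Ak n k * ∫⁻ x in Gamma n k, wk n k x = 1 := by
  set b : ℝ≥0∞ := (2 ^ ((k - 1) * n) + 1)⁻¹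
  have hdisj : Pairwise (Function.onFun Disjoint fun m ↦ Q1 n k (m + 3)) := fun m m' h ↦
    (pairwise_disjoint_Omega_succ n k (by omega : m + 2 ≠ m' + 2)).mono
      (Q1_succ_subset_Omega n hk _) (Q1_succ_subset_Omega n hk _)
  have hterm (m : ℕ) :
      Ak n k * ∫⁻ x in Q1 n k (m + 3), wk n k x = b ^ m * (2 ^ ((k - 1) * n) * b) := calc
    _ = Ak n k * b ^ (m + 3) := by rw [setLIntegral_Q1_wk n hk (m + 2)]
    _ = b ^ m * (Ak n k * b ^ 2 * b) := by ring
    _ = b ^ m * (2 ^ ((k - 1) * n) * b) := by rw [Ak_mul_inv_sq]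
  rw [Gamma, lintegral_iUnion (fun _ ↦ measurableSet_Q1 n k _) hdisj, ← ENNReal.tsum_mul_left,
    tsum_congr hterm]
  refine tsum_pow_mul_eq_one (add_comm b _ ▸ mul_inv_add_one_add_inv (by simp)) ?_
  exact mul_ne_zero (by positivity) (by simp [b])

lemma Q1_subset_Cube (hk : 1 ≤ k) (hik : i ≤ k) (n m : ℕ) :
    Q1 n k (m + 2) ⊆ Cube n 0 (2 ^ (k * m + i))⁻¹ := by
  rw [Q1_succ, Cube_zero]
  refine pi_mono fun _ _ ↦ (Ico_subset_digitSet_inter hk (m + 1)).trans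
    (inter_subset_right.trans (Ico_subset_Ico_right (inv_anti₀ (by positivity) ?_)))
  exact pow_le_pow_right₀ one_le_two (mul_add_one k m ▸ Nat.add_le_add_left hik _)

end Gamma

section Blocks

variable {n k k' : ℕ} {q : ℝ} {x : Fin n → ℝ}

/-- The point `2⃗^k = (2^k, …, 2^k)`: the corner of the cubes `sCube n k N` with `k ≥ 1`, and the
vector by which the `k`-th terms of `bigW` and `bigF` are translated. -/
def dyadicCorner (n k : ℕ) : Fin n → ℝ := fun _ ↦ 2 ^ k

lemma sCube_eq_preimage (n : ℕ) (hk : k ≠ 0) (N : ℕ) :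
    sCube n k N = (· - dyadicCorner n k) ⁻¹' Cube n 0 (2 ^ N)⁻¹ := by
  simp only [sCube, hk, if_false, zpow_neg, zpow_natCast, preimage_sub_Cube, zero_add]
  rfl

lemma eq_of_sub_dyadicCorner_mem_Cube [NeZero n] (h : x - dyadicCorner n k ∈ Cube n 0 1)
    (h' : x - dyadicCorner n k' ∈ Cube n 0 1) : k = k' := by
  have floor_eq {l : ℕ} (hl : x - dyadicCorner n l ∈ Cube n 0 1) : ⌊x 0⌋ = (2 ^ l : ℕ) := by
    have := hl 0 trivial
    rw [Int.floor_eq_iff]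
    push_cast
    exact ⟨sub_nonneg.1 this.1, sub_lt_iff_lt_add'.1 (this.2.trans_eq (zero_add 1))⟩
  exact Nat.pow_right_injective le_rfl (by exact_mod_cast (floor_eq h).symm.trans (floor_eq h'))

/-- The set `2⃗^k + Γ(k)`; for `k ≥ 3` these sets are the pieces of the support of `bigW`. -/
def weightBlock (n k : ℕ) : Set (Fin n → ℝ) := (· - dyadicCorner n k) ⁻¹' Gamma n k

lemma measurableSet_weightBlock (n k : ℕ) : MeasurableSet (weightBlock n k) :=
  (measurable_sub_const _) (measurableSet_Gamma n k)

lemma sub_dyadicCorner_mem_Cube (hk : 1 ≤ k) (hx : x ∈ weightBlock n k) :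
    x - dyadicCorner n k ∈ Cube n 0 1 :=
  Gamma_subset_Cube n hk hx

lemma pairwise_disjoint_weightBlock (n : ℕ) [NeZero n] :
    Pairwise (Function.onFun Disjoint fun k ↦ weightBlock n (k + 3)) := fun _ _ h ↦
  disjoint_left.2 fun _ hx hx' ↦ h <| Nat.add_right_cancel <| eq_of_sub_dyadicCorner_mem_Cube
    (sub_dyadicCorner_mem_Cube (by omega) hx) (sub_dyadicCorner_mem_Cube (by omega) hx')

lemma bigW_eq_tsum_indicator (x : Fin n → ℝ) :
    bigW n x = ∑' k, (weightBlock n (k + 3)).indicator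
      (fun y ↦ Ak n (k + 3) * wk n (k + 3) (y - dyadicCorner n (k + 3))) x :=
  rfl

lemma measurable_bigW (n : ℕ) : Measurable (bigW n) :=
  .tsum fun k ↦ (((measurable_wk n _).const_mul _).indicator (measurableSet_Gamma n _)).comp
    (measurable_sub_const (dyadicCorner n (k + 3)))

lemma bigW_of_mem_weightBlock [NeZero n] (hx : x ∈ weightBlock n (k + 3)) :
    bigW n x = Ak n (k + 3) * wk n (k + 3) (x - dyadicCorner n (k + 3)) :=
  (bigW_eq_tsum_indicator x).trans <| (tsum_eq_single k fun _ hl ↦ indicator_of_notMem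
    (fun h ↦ disjoint_left.1 (pairwise_disjoint_weightBlock n hl) h hx) _).trans
    (indicator_of_mem hx _)

lemma bigF_of_mem_weightBlock [NeZero n] (ε : ℝ) (hx : x ∈ weightBlock n (k + 3)) :
    bigF n ε x = ((k : ℝ≥0∞) + 3) ^ (-ε) * bigW n x := by
  rw [bigW_of_mem_weightBlock hx, ← mul_assoc]
  refine tsum_eq_single k fun l hl ↦ mul_eq_zero_of_right _ (wk_eq_zero fun h ↦ hl ?_)
  exact Nat.add_right_cancel (eq_of_sub_dyadicCorner_mem_Cube h
    (sub_dyadicCorner_mem_Cube (by omega) hx))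

lemma exists_mem_Q1_and_bigW_eq [NeZero n] (hx : x ∈ weightBlock n (k + 3)) :
    ∃ m, x - dyadicCorner n (k + 3) ∈ Q1 n (k + 3) (m + 3) ∧
      bigW n x = Ak n (k + 3) * weightRatio n (k + 3) ^ (m + 3) := by
  obtain ⟨m, hm⟩ := mem_iUnion.1 hx
  exact ⟨m, hm, by rw [bigW_of_mem_weightBlock hx, wk_of_mem_Q1 (by omega) hm]⟩

lemma bigW_ne_zero [NeZero n] (hx : x ∈ weightBlock n (k + 3)) : bigW n x ≠ 0 := by
  obtain ⟨m, -, hW⟩ := exists_mem_Q1_and_bigW_eq hx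
  exact hW ▸ mul_ne_zero (Ak_ne_zero _ _) (pow_ne_zero _ (weightRatio_ne_zero _ _))

lemma bigW_ne_top [NeZero n] (hx : x ∈ weightBlock n (k + 3)) : bigW n x ≠ ∞ := by
  obtain ⟨m, -, hW⟩ := exists_mem_Q1_and_bigW_eq hx
  exact hW ▸ ENNReal.mul_ne_top (Ak_ne_top _ _) (ENNReal.pow_ne_top (weightRatio_ne_top _ _))

lemma setOf_bigW_ne_zero (n : ℕ) [NeZero n] :
    {x | bigW n x ≠ 0} = ⋃ k, weightBlock n (k + 3) := by
  ext x
  refine ⟨fun hx ↦ ?_, fun hx ↦ ?_⟩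
  · rw [mem_ofPred_eq, bigW_eq_tsum_indicator] at hx
    obtain ⟨k, hk⟩ := not_forall.1 (mt ENNReal.tsum_eq_zero.2 hx)
    exact mem_iUnion.2 ⟨k, mem_of_indicator_ne_zero hk⟩
  · obtain ⟨k, hk⟩ := mem_iUnion.1 hx
    exact bigW_ne_zero hk

lemma setLIntegral_support_bigW (n : ℕ) [NeZero n] (g : (Fin n → ℝ) → ℝ≥0∞) :
    ∫⁻ x in {x | bigW n x ≠ 0}, g x = ∑' k, ∫⁻ x in weightBlock n (k + 3), g x := by
  rw [setOf_bigW_ne_zero, lintegral_iUnion (fun _ ↦ measurableSet_weightBlock n _)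
    (pairwise_disjoint_weightBlock n)]

lemma setLIntegral_weightBlock_bigW (n k : ℕ) [NeZero n] :
    ∫⁻ x in weightBlock n (k + 3), bigW n x = 1 := calc
  _ = ∫⁻ x in weightBlock n (k + 3),
        Ak n (k + 3) * wk n (k + 3) (x - dyadicCorner n (k + 3)) :=
    setLIntegral_congr_fun (measurableSet_weightBlock n _) fun _ ↦ bigW_of_mem_weightBlock
  _ = ∫⁻ x in Gamma n (k + 3), Ak n (k + 3) * wk n (k + 3) x :=
    (measurePreserving_sub_right volume _).setLIntegral_comp_preimage (measurableSet_Gamma n _)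
      ((measurable_wk n _).const_mul _)
  _ = 1 := by
    rw [lintegral_const_mul _ (measurable_wk n _), Ak_mul_setLIntegral_Gamma_wk n (by omega)]

lemma setLIntegral_weightBlock_mul_rpow (n k : ℕ) [NeZero n] (hq : 0 ≤ q) (c : ℝ≥0∞) :
    ∫⁻ x in weightBlock n (k + 3), (c * bigW n x) ^ q * bigW n x ^ (1 - q) = c ^ q := by
  rw [setLIntegral_congr_fun (measurableSet_weightBlock n _) fun _ hx ↦
      mul_rpow_mul_rpow_one_sub hq (bigW_ne_zero hx) (bigW_ne_top hx) c,
    lintegral_const_mul _ (measurable_bigW n), setLIntegral_weightBlock_bigW, mul_one]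

end Blocks

section Sparse

variable {n k i : ℕ} {x : Fin n → ℝ}

lemma le_average_sCube_bigF (n : ℕ) (ε : ℝ) (hi : 1 ≤ i) (hik : i ≤ k + 3) (j : ℕ) :
    ((k : ℝ≥0∞) + 3) ^ (-ε) * Ak n (k + 3) * weightRatio n (k + 3) ^ (j + 1) ≤
      (volume (sCube n (k + 3) ((k + 3) * j + i)))⁻¹ *
        ∫⁻ y in sCube n (k + 3) ((k + 3) * j + i), bigF n ε y := by
  set c := ((k : ℝ≥0∞) + 3) ^ (-ε) * Ak n (k + 3)
  set Q := Cube n 0 (2 ^ ((k + 3) * j + i))⁻¹ with hQ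
  have translation := measurePreserving_sub_right volume (dyadicCorner n (k + 3))
  have hvol : volume Q ≠ 0 ∧ volume Q ≠ ∞ := by
    rw [volume_Cube, ofReal_inv_two_pow]
    simp
  rw [sCube_eq_preimage n (by omega),
    translation.measure_preimage measurableSet_Cube.nullMeasurableSet, ← hQ,
    ← ENNReal.mul_le_iff_le_inv hvol.1 hvol.2]
  calc volume Q * (c * weightRatio n (k + 3) ^ (j + 1))
    _ = c * (volume Q * weightRatio n (k + 3) ^ (j + 1)) := mul_left_comm _ _ _
    _ ≤ c * ∫⁻ x in Q, wk n (k + 3) x := by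
      gcongr
      exact volume_Cube_mul_pow_le_setLIntegral_wk n hi hik j
    _ = ∫⁻ x in (· - dyadicCorner n (k + 3)) ⁻¹' Q,
          c * wk n (k + 3) (x - dyadicCorner n (k + 3)) := by
      rw [← lintegral_const_mul _ (measurable_wk n _),
        ← translation.setLIntegral_comp_preimage measurableSet_Cube
          ((measurable_wk n _).const_mul _)]
    _ ≤ ∫⁻ x in (· - dyadicCorner n (k + 3)) ⁻¹' Q, bigF n ε x :=
      lintegral_mono fun _ ↦ ENNReal.le_tsum k

lemma mul_bigW_le_TS_bigF [NeZero n] (ε : ℝ) (hx : x ∈ weightBlock n (k + 3)) :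
    (2 ^ n)⁻¹ * ((k : ℝ≥0∞) + 3) ^ (1 - ε) * bigW n x ≤ TS (bigF n ε) x := by
  obtain ⟨m, hm, hW⟩ := exists_mem_Q1_and_bigW_eq hx
  set r := weightRatio n (k + 3)
  have mem_sCube {i : ℕ} (hi : i ≤ k + 3) : x ∈ sCube n (k + 3) ((k + 3) * (m + 1) + i) := by
    rw [sCube_eq_preimage n (by omega)]
    exact Q1_subset_Cube (by omega) hi n (m + 1) hm
  have hinj : Function.Injective fun i ↦ (k + 3, (k + 3) * (m + 1) + i) := fun i i' h ↦ by
    simpa using h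
  have hpow : ((k : ℝ≥0∞) + 3) ^ (1 - ε) = (k + 3) * (k + 3) ^ (-ε) := by
    rw [sub_eq_add_neg, ENNReal.rpow_add _ _ (by simp) (by simp), ENNReal.rpow_one]
  calc (2 ^ n)⁻¹ * ((k : ℝ≥0∞) + 3) ^ (1 - ε) * bigW n x
    _ = (k + 3) * ((k + 3) ^ (-ε) * Ak n (k + 3) * r ^ (m + 2)) * (r * (2 ^ n)⁻¹) := by
      rw [hW, hpow]
      ring
    _ ≤ (k + 3) * ((k + 3) ^ (-ε) * Ak n (k + 3) * r ^ (m + 2)) :=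
      mul_le_of_le_one_right' (weightRatio_mul_inv_two_pow_le_one n (by omega))
    _ = (Finset.Icc 1 (k + 3)).card * ((k + 3) ^ (-ε) * Ak n (k + 3) * r ^ (m + 2)) := by simp
    _ ≤ TS (bigF n ε) x := card_mul_le_tsum hinj _ fun i hi ↦ by
      obtain ⟨hi1, hik⟩ := Finset.mem_Icc.1 hi
      rw [indicator_of_mem (mem_sCube hik)]
      exact le_average_sCube_bigF n ε hi1 hik (m + 1)

end Sparse

section Integrals

variable {ε q : ℝ}

lemma setLIntegral_support_bigF_rpow (n : ℕ) [NeZero n] (ε : ℝ) (hq : 0 ≤ q) :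
    ∫⁻ x in {x | bigW n x ≠ 0}, bigF n ε x ^ q * bigW n x ^ (1 - q) =
      ∑' k : ℕ, ((k : ℝ≥0∞) + 3) ^ (-(ε * q)) := by
  rw [setLIntegral_support_bigW]
  refine tsum_congr fun k ↦ ?_
  rw [setLIntegral_congr_fun (measurableSet_weightBlock n _) fun _ hx ↦ by
      rw [bigF_of_mem_weightBlock ε hx],
    setLIntegral_weightBlock_mul_rpow n k hq, ← ENNReal.rpow_mul, neg_mul]

lemma mul_tsum_le_setLIntegral_support_TS_bigF_rpow (n : ℕ) [NeZero n] (ε : ℝ) (hq : 0 ≤ q) :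
    ((2 ^ n)⁻¹) ^ q * ∑' k : ℕ, ((k : ℝ≥0∞) + 3) ^ (-((ε - 1) * q)) ≤
      ∫⁻ x in {x | bigW n x ≠ 0}, TS (bigF n ε) x ^ q * bigW n x ^ (1 - q) := by
  rw [setLIntegral_support_bigW, ← ENNReal.tsum_mul_left]
  refine ENNReal.tsum_le_tsum fun k ↦ ?_
  rw [← neg_mul, neg_sub, ENNReal.rpow_mul, ← ENNReal.mul_rpow_of_nonneg _ _ hq,
    ← setLIntegral_weightBlock_mul_rpow n k hq]
  refine setLIntegral_mono' (measurableSet_weightBlock n _) fun x hx ↦ ?_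
  gcongr
  exact mul_bigW_le_TS_bigF ε hx

lemma setLIntegral_support_TS_bigF_rpow_eq_top (n : ℕ) [NeZero n] (hq : 0 ≤ q)
    (hε : (ε - 1) * q ≤ 1) :
    ∫⁻ x in {x | bigW n x ≠ 0}, TS (bigF n ε) x ^ q * bigW n x ^ (1 - q) = ∞ := by
  have hdiv : ∑' k : ℕ, ((k : ℝ≥0∞) + 3) ^ (-((ε - 1) * q)) = ∞ :=
    not_ne_iff.1 fun h ↦ hε.not_gt ((tsum_nat_add_rpow_neg_ne_top_iff three_ne_zero).1 h)
  refine eq_top_iff.2 (le_trans ?_ (mul_tsum_le_setLIntegral_support_TS_bigF_rpow n ε hq))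
  rw [hdiv, ENNReal.mul_top]
  simp

end Integrals

theorem f_in_Lp_but_TSf_not_general (n : ℕ) (hn : 1 ≤ n) (q : ℝ) (hq : 0 < q)
    (ε : ℝ) (hε1 : 1 / q < ε) (hε2 : ε ≤ 1 + 1 / q) :
    (∫⁻ x in {x | bigW n x ≠ 0}, bigF n ε x ^ q * bigW n x ^ (1 - q)
        = ∑' k : ℕ, ((k : ℝ≥0∞) + 3) ^ (-(ε * q))) ∧
    (∑' k : ℕ, ((k : ℝ≥0∞) + 3) ^ (-(ε * q)) ≠ ∞) ∧
    (∫⁻ x in {x | bigW n x ≠ 0}, TS (bigF n ε) x ^ q * bigW n x ^ (1 - q) = ∞) := by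
  have : NeZero n := ⟨by omega⟩
  refine ⟨setLIntegral_support_bigF_rpow n ε hq.le, ?_,
    setLIntegral_support_TS_bigF_rpow_eq_top n hq.le ?_⟩
  · exact (tsum_nat_add_rpow_neg_ne_top_iff three_ne_zero).2 ((div_lt_iff₀ hq).1 hε1)
  · rw [← le_div_iff₀ hq]
    linarith

/-- For `n ≥ 1`, `p ∈ (1,∞)` with `p' = p/(p-1)` and `1/p' < ε < 1`:
`∫_{supp w} f^{p'} w^{1-p'} = Σ_{k ≥ 3} k^{-εp'} < ∞`, while
`∫_{supp w} (T_S f)^{p'} w^{1-p'} = ∞`. -/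
theorem f_in_Lp_but_TSf_not (n : ℕ) (hn : 1 ≤ n) (p : ℝ) (hp : 1 < p)
    (ε : ℝ) (hε1 : 1 / (p/(p-1)) < ε) (hε2 : ε < 1) :
    (∫⁻ x in {x | bigW n x ≠ 0}, bigF n ε x ^ (p/(p-1)) * bigW n x ^ (1 - p/(p-1))
        = ∑' k : ℕ, ((k : ℝ≥0∞) + 3) ^ (-(ε * (p/(p-1))))) ∧
    (∑' k : ℕ, ((k : ℝ≥0∞) + 3) ^ (-(ε * (p/(p-1)))) ≠ ∞) ∧
    (∫⁻ x in {x | bigW n x ≠ 0},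
        TS (bigF n ε) x ^ (p/(p-1)) * bigW n x ^ (1 - p/(p-1)) = ∞) := by
  have hq : 0 < p / (p - 1) := div_pos (by linarith) (by linarith)
  exact f_in_Lp_but_TSf_not_general n hn _ hq ε hε1 (by linarith [one_div_pos.2 hq])
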